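/- Let N = 2. Then ε_{2,2} = ζ(2) log 2 − 1 = (π²/6) log 2 − 1, where ε_{2,2} = sup{ |ρ^t_2(R_2^{−1}(C))/ρ_2(R_2^{−1}(C)) − 1| : t ∈ [0,1], C ⊆ [0,1] Borel with ρ_2(R_2^{−1}(C)) > 0 }. -/

import Mathlib

open MeasureTheory Set Real Filter

/-- The Rényi-type continued fraction map `R_N`. -/
noncomputable def RN (N : ℕ) (x : ℝ) : ℝ :=
  if x = 1 then 0 else (N : ℝ) / (1 - x) - ⌊(N : ℝ) / (1 - x)⌋

/-- The conditional probability measure `ρ^t_N`, with density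
`N(N-1+t)/[N-(1-x)(1-t)]²` on `[0,1]`. -/
noncomputable def rhoT (N : ℕ) (t : ℝ) : Measure ℝ :=
  (volume.restrict (Set.Icc (0 : ℝ) 1)).withDensity fun x =>
    ENNReal.ofReal ((N : ℝ) * ((N : ℝ) - 1 + t) / ((N : ℝ) - (1 - x) * (1 - t)) ^ 2)

/-- The invariant probability measure `ρ_N`, with density
`(log(N/(N-1)))⁻¹/(x+N-1)` on `[0,1]`. -/
noncomputable def rhoN (N : ℕ) : Measure ℝ :=
  (volume.restrict (Set.Icc (0 : ℝ) 1)).withDensity fun x =>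
    ENNReal.ofReal ((Real.log ((N : ℝ) / ((N : ℝ) - 1)))⁻¹ / (x + (N : ℝ) - 1))

open scoped Topology ENNReal

lemma hasSum_tele (a : ℕ → ℝ) (h : ∀ k, a (k + 1) ≤ a k) (h0 : Tendsto a atTop (𝓝 0)) :
    HasSum (fun k => a k - a (k + 1)) (a 0) := by
  rw [hasSum_iff_tendsto_nat_of_nonneg (fun k => sub_nonneg.2 (h k))]
  simp_rw [Finset.sum_range_sub']
  simpa using h0.const_sub (a 0)

lemma tendsto_inv_aux (c : ℝ) : Tendsto (fun k : ℕ => 1 / ((k : ℝ) + c)) atTop (𝓝 0) := by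
  have h : Tendsto (fun k : ℕ => (k : ℝ) + c) atTop atTop :=
    tendsto_atTop_add_const_right _ _ tendsto_natCast_atTop_atTop
  simp only [one_div]
  exact h.inv_tendsto_atTop

lemma hasSum_zeta_shift : HasSum (fun k : ℕ => 1 / ((k : ℝ) + 1) ^ 2) (π ^ 2 / 6) := by
  have h := (hasSum_nat_add_iff' (f := fun n : ℕ => (1 : ℝ) / (n : ℝ) ^ 2) 1).2 hasSum_zeta_two
  simpa using h

lemma summable_S {s : ℝ} (hs : 0 ≤ s) : Summable (fun k : ℕ => 1 / ((k : ℝ) + 1 + s) ^ 2) := by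
  refine Summable.of_nonneg_of_le (fun k => by positivity) (fun k => ?_) hasSum_zeta_shift.summable
  refine one_div_le_one_div_of_le (by positivity) (pow_le_pow_left₀ (by positivity) ?_ 2)
  linarith

noncomputable def SS (s : ℝ) : ℝ := ∑' k : ℕ, 1 / ((k : ℝ) + 1 + s) ^ 2

lemma SS_lower {s : ℝ} (hs : 0 ≤ s) : 1 / (1 + s) + 1 / (2 * (1 + s) ^ 2) ≤ SS s := by
  set a : ℕ → ℝ := fun k => 1 / ((k : ℝ) + (1 + s)) + 1 / 2 * (1 / ((k : ℝ) + (1 + s))) ^ 2 with ha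
  have h0 : Tendsto a atTop (𝓝 0) := by
    have h := tendsto_inv_aux (1 + s)
    have h' := h.add ((h.pow 2).const_mul (1 / 2))
    norm_num at h' ⊢
    simpa [ha] using h'
  have hm : ∀ k, a (k + 1) ≤ a k := by
    intro k
    simp only [ha]
    push_cast
    gcongr <;> linarith
  have ht := hasSum_tele a hm h0
  have : a 0 = 1 / (1 + s) + 1 / (2 * (1 + s) ^ 2) := by
    simp only [ha]; push_cast; field_simp; ring_nf
  rw [← this]
  refine hasSum_le (fun k => ?_) ht (summable_S hs).hasSum
  simp only [ha]
  push_cast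
  have hu : 0 < (k : ℝ) + 1 + s := by positivity
  generalize hx : (k : ℝ) + 1 + s = u at *
  have e1 : (k : ℝ) + (1 + s) = u := by linarith
  have e2 : (k : ℝ) + 1 + (1 + s) = u + 1 := by linarith
  rw [e1, e2]
  have : 1 / u ^ 2 - (1 / u + 1 / 2 * (1 / u) ^ 2 - (1 / (u + 1) + 1 / 2 * (1 / (u + 1)) ^ 2))
     = 1 / 2 * (1 / u - 1 / (u + 1)) ^ 2 := by field_simp; ring
  nlinarith [sq_nonneg (1 / u - 1 / (u + 1))]

lemma term_bound {s n : ℝ} (hs : 0 ≤ s) (hn : 4 ≤ n) :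
    (1 + s / 2) ^ 2 * (1 / (n + s) ^ 2) - 1 / n ^ 2 ≤
      s * (4 + s) / 4 * (1 / (n + 1 / 2 + 3 * s / 4) - 1 / (n + 1 + 1 / 2 + 3 * s / 4)) := by
  have hn0 : 0 < n := by linarith
  have hd1 : 0 < n + 1 / 2 + 3 * s / 4 := by positivity
  have hd2 : 0 < n + 1 + 1 / 2 + 3 * s / 4 := by positivity
  have e1 : (1 + s / 2) ^ 2 * (1 / (n + s) ^ 2) - 1 / n ^ 2
      = s / 4 * (((n - 2) * (4 * n + 2 * s + n * s)) / (n ^ 2 * (n + s) ^ 2)) := by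
    field_simp; ring
  have e2 : s * (4 + s) / 4 * (1 / (n + 1 / 2 + 3 * s / 4) - 1 / (n + 1 + 1 / 2 + 3 * s / 4))
      = s / 4 * ((4 + s) / ((n + 1 / 2 + 3 * s / 4) * (n + 1 + 1 / 2 + 3 * s / 4))) := by
    rw [div_sub_div _ _ hd1.ne' hd2.ne']; ring
  rw [e1, e2]
  apply mul_le_mul_of_nonneg_left _ (by positivity)
  rw [div_le_div_iff₀ (by positivity) (by positivity)]
  have : (4 + s) * (n ^ 2 * (n + s) ^ 2) - (n - 2) * (4 * n + 2 * s + n * s) *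
      ((n + 1 / 2 + 3 * s / 4) * (n + 1 + 1 / 2 + 3 * s / 4)) =
      s ^ 2 / 2 * n ^ 3 + (13 + 37 / 4 * s + s ^ 2 / 4 + 7 / 16 * s ^ 3) * n ^ 2
      + (8 * (3 / 4 + 3 / 2 * s + 9 / 16 * s ^ 2) + 8 * s * (1 + 3 * s / 4)) * n
      + 4 * s * (3 / 4 + 3 / 2 * s + 9 / 16 * s ^ 2) := by ring
  have h2 : 0 ≤ s ^ 2 / 2 * n ^ 3 + (13 + 37 / 4 * s + s ^ 2 / 4 + 7 / 16 * s ^ 3) * n ^ 2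
      + (8 * (3 / 4 + 3 / 2 * s + 9 / 16 * s ^ 2) + 8 * s * (1 + 3 * s / 4)) * n
      + 4 * s * (3 / 4 + 3 / 2 * s + 9 / 16 * s ^ 2) := by positivity
  linarith

lemma final_poly {s : ℝ} (hs : 0 ≤ s) (hs2 : s ≤ 2) :
    ((1 + s / 2) ^ 2 * (1 / (1 + s) ^ 2) - 1) + ((1 + s / 2) ^ 2 * (1 / (2 + s) ^ 2) - 1 / 4)
    + ((1 + s / 2) ^ 2 * (1 / (3 + s) ^ 2) - 1 / 9)
    + s * (4 + s) / 4 * (1 / (4 + 1 / 2 + 3 * s / 4)) ≤ 0 := by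
  have e : ((1 + s / 2) ^ 2 * (1 / (1 + s) ^ 2) - 1) + ((1 + s / 2) ^ 2 * (1 / (2 + s) ^ 2) - 1 / 4)
    + ((1 + s / 2) ^ 2 * (1 / (3 + s) ^ 2) - 1 / 9)
    + s * (4 + s) / 4 * (1 / (4 + 1 / 2 + 3 * s / 4)) =
    - (s * (4320 + 4896 * s + 426 * s ^ 2 - 1020 * s ^ 3 - 366 * s ^ 4 - 36 * s ^ 5) /
      (108 * (1 + s) ^ 2 * (3 + s) ^ 2 * (6 + s))) := by
    have : (4 : ℝ) + 1 / 2 + 3 * s / 4 = 3 / 4 * (6 + s) := by ring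
    rw [this]
    field_simp
    ring
  rw [e, neg_nonpos]
  have : 0 ≤ 4320 + 4896 * s + 426 * s ^ 2 - 1020 * s ^ 3 - 366 * s ^ 4 - 36 * s ^ 5 := by
    have h3 : s ^ 3 ≤ 2 * s ^ 2 := by nlinarith [sq_nonneg s]
    have h4 : s ^ 4 ≤ 4 * s ^ 2 := by nlinarith [sq_nonneg s]
    have h5 : s ^ 5 ≤ 8 * s ^ 2 := by nlinarith [sq_nonneg s, mul_le_mul_of_nonneg_left h4 hs]
    nlinarith
  positivity

lemma SS_upper {s : ℝ} (hs : 0 ≤ s) (hs2 : s ≤ 2) : (1 + s / 2) ^ 2 * SS s ≤ π ^ 2 / 6 := by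
  have h1 := ((summable_S hs).hasSum.mul_left ((1 + s / 2) ^ 2)).sub hasSum_zeta_shift
  have h2 := (hasSum_nat_add_iff' 3).2 h1
  set a : ℕ → ℝ := fun k => 1 / ((k : ℝ) + (4 + 1 / 2 + 3 * s / 4)) with ha
  have hm : ∀ k, a (k + 1) ≤ a k := by
    intro k
    simp only [ha]
    push_cast
    gcongr
    linarith
  have ht := (hasSum_tele a hm (tendsto_inv_aux _)).mul_left (s * (4 + s) / 4)
  have h3 := hasSum_le (fun k => ?_) h2 ht
  · have hp := final_poly hs hs2
    simp only [Finset.sum_range_succ, Finset.sum_range_zero, ha] at h3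
    norm_num at h3 hp
    simp only [SS]
    norm_num
    linarith
  · have := term_bound (n := (k : ℝ) + 4) hs (by linarith [(Nat.cast_nonneg k : (0 : ℝ) ≤ k)])
    simp only [ha]
    push_cast
    have c1 : (k : ℝ) + 3 + 1 + s = k + 4 + s := by ring
    have c2 : (k : ℝ) + 3 + 1 = k + 4 := by ring
    have c3 : (k : ℝ) + (4 + 1 / 2 + 3 * s / 4) = k + 4 + 1 / 2 + 3 * s / 4 := by ring
    have c4 : (k : ℝ) + 1 + (4 + 1 / 2 + 3 * s / 4) = k + 4 + 1 + 1 / 2 + 3 * s / 4 := by ring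
    rw [c1, c2, c3, c4]
    exact this

/-- ratio bounds -/
lemma G_upper {t y : ℝ} (ht : t ∈ Icc (0 : ℝ) 1) (hy : y ∈ Icc (0 : ℝ) 1) :
    (1 + t) * (1 + y) * SS (y + t) ≤ π ^ 2 / 6 := by
  obtain ⟨ht0, ht1⟩ := ht
  obtain ⟨hy0, hy1⟩ := hy
  have hS : 0 ≤ SS (y + t) := tsum_nonneg fun k => by positivity
  refine le_trans (mul_le_mul_of_nonneg_right ?_ hS)
    (SS_upper (s := y + t) (by linarith) (by linarith))
  nlinarith [sq_nonneg (t - y)]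

lemma G_lower {t y : ℝ} (ht : t ∈ Icc (0 : ℝ) 1) (hy : y ∈ Icc (0 : ℝ) 1) :
    5 / 4 ≤ (1 + t) * (1 + y) * SS (y + t) := by
  obtain ⟨ht0, ht1⟩ := ht
  obtain ⟨hy0, hy1⟩ := hy
  have hs : 0 ≤ y + t := by linarith
  have hl := SS_lower hs
  have e : 1 / (1 + (y + t)) + 1 / (2 * (1 + (y + t)) ^ 2)
      = (2 * (y + t) + 3) / (2 * (1 + (y + t)) ^ 2) := by field_simp; ring
  rw [e] at hl
  refine le_trans ?_ (mul_le_mul_of_nonneg_left hl (by positivity))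
  rw [← mul_div_assoc, le_div_iff₀ (by positivity)]
  rcases le_total (y + t) 1 with h | h
  · have : 1 + (y + t) ≤ (1 + t) * (1 + y) := by nlinarith
    nlinarith [mul_le_mul_of_nonneg_right this (by linarith : 0 ≤ 2 * (y + t) + 3)]
  · have : 2 * (y + t) ≤ (1 + t) * (1 + y) := by nlinarith
    nlinarith [mul_le_mul_of_nonneg_right this (by linarith : 0 ≤ 2 * (y + t) + 3)]

lemma SS_near {y : ℝ} (hy : 0 ≤ y) : π ^ 2 / 6 * (1 - 2 * y) ≤ SS y := by
  refine hasSum_le (fun k => ?_) (hasSum_zeta_shift.mul_right (1 - 2 * y)) (summable_S hy).hasSum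
  have hk : (1 : ℝ) ≤ (k : ℝ) + 1 := by linarith [(Nat.cast_nonneg k : (0 : ℝ) ≤ k)]
  generalize (k : ℝ) + 1 = n at *
  rw [div_mul_eq_mul_div, div_le_div_iff₀ (by positivity) (by positivity)]
  have h1 : (1 - 2 * y) * (n + y) ^ 2 = n ^ 2 - (2 * y * n * (n - 1) + y ^ 2 * (4 * n - 1) + 2 * y ^ 3) := by
    ring
  have h2 : 0 ≤ 2 * y * n * (n - 1) := mul_nonneg (by positivity) (by linarith)
  have h3 : 0 ≤ y ^ 2 * (4 * n - 1) := mul_nonneg (by positivity) (by linarith)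
  have h4 : 0 ≤ 2 * y ^ 3 := by positivity
  linarith

lemma RN_preim (C : Set ℝ) :
    RN 2 ⁻¹' C ∩ Ico (0 : ℝ) 1 =
      ⋃ k : ℕ, (fun y : ℝ => 1 - 2 / ((k : ℝ) + 2 + y)) '' (C ∩ Ico (0 : ℝ) 1) := by
  ext x
  simp only [mem_inter_iff, mem_preimage, mem_iUnion, mem_image, mem_Ico]
  constructor
  · rintro ⟨hC, h0, h1⟩
    have hx : 0 < 1 - x := by linarith
    rw [RN, if_neg h1.ne] at hC
    push_cast at hC
    have hge : (2 : ℝ) ≤ 2 / (1 - x) := by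
      rw [le_div_iff₀ hx]; linarith
    have hf : (2 : ℤ) ≤ ⌊2 / (1 - x)⌋ := by
      rw [Int.le_floor]; exact_mod_cast hge
    obtain ⟨k, hk⟩ := Int.le.dest hf
    refine ⟨k, 2 / (1 - x) - ⌊2 / (1 - x)⌋, ⟨hC, Int.fract_nonneg _, Int.fract_lt_one _⟩, ?_⟩
    rw [← hk]
    push_cast
    have : (k : ℝ) + 2 + (2 / (1 - x) - (2 + k)) = 2 / (1 - x) := by ring
    rw [this]
    field_simp
    ring
  · rintro ⟨k, y, ⟨hC, h0, h1⟩, rfl⟩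
    have hp : 0 < (k : ℝ) + 2 + y := by positivity
    have hq : 2 / ((k : ℝ) + 2 + y) ≤ 1 := by
      rw [div_le_one hp]; linarith [(Nat.cast_nonneg k : (0 : ℝ) ≤ k)]
    have hq' : 0 < 2 / ((k : ℝ) + 2 + y) := by positivity
    refine ⟨?_, by linarith, by linarith⟩
    rw [RN, if_neg (by linarith)]
    have e : ((2 : ℕ) : ℝ) / (1 - (1 - 2 / ((k : ℝ) + 2 + y))) = y + ((k + 2 : ℤ) : ℝ) := by
      push_cast; field_simp; ring
    rw [e, Int.floor_add_intCast, Int.floor_eq_zero_iff.2 ⟨h0, h1⟩]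
    simpa using hC

lemma RN_meas (N : ℕ) : Measurable (RN N) := by
  unfold RN
  refine Measurable.ite (measurableSet_singleton 1) measurable_const ?_
  fun_prop

lemma branch_disj (A : Set ℝ) (hA : A ⊆ Ico (0 : ℝ) 1) :
    Pairwise (Function.onFun Disjoint
      (fun k : ℕ => (fun y : ℝ => 1 - 2 / ((k : ℝ) + 2 + y)) '' A)) := by
  intro i j hij
  rw [Function.onFun, Set.disjoint_left]
  rintro _ ⟨y, hy, rfl⟩ ⟨z, hz, hzy⟩
  obtain ⟨hy0, hy1⟩ := hA hy
  obtain ⟨hz0, hz1⟩ := hA hz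
  have hp : 0 < (i : ℝ) + 2 + y := by positivity
  have hq : 0 < (j : ℝ) + 2 + z := by positivity
  have h : (2 : ℝ) / ((j : ℝ) + 2 + z) = 2 / ((i : ℝ) + 2 + y) := by
    simp only at hzy; linarith
  rw [div_eq_div_iff hq.ne' hp.ne'] at h
  have h' : (i : ℝ) + y = j + z := by linarith
  apply hij
  have a1 : (i : ℝ) < j + 1 := by linarith
  have a2 : (j : ℝ) < i + 1 := by linarith
  have b1 : i < j + 1 := by exact_mod_cast a1
  have b2 : j < i + 1 := by exact_mod_cast a2
  omega

lemma push_gen (φ : ℝ → ℝ≥0∞) (hφ : Measurable φ) (C : Set ℝ) (hC : MeasurableSet C) :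
    ((volume.restrict (Set.Icc (0 : ℝ) 1)).withDensity φ) (RN 2 ⁻¹' C) =
      ∫⁻ y in C ∩ Ico (0 : ℝ) 1,
        ∑' k : ℕ, ENNReal.ofReal (2 / ((k : ℝ) + 2 + y) ^ 2) * φ (1 - 2 / ((k : ℝ) + 2 + y)) := by
  have hpre : MeasurableSet (RN 2 ⁻¹' C) := RN_meas 2 hC
  have hA : MeasurableSet (C ∩ Ico (0 : ℝ) 1) := hC.inter measurableSet_Ico
  rw [withDensity_apply _ hpre, Measure.restrict_congr_set Ico_ae_eq_Icc.symm,
    Measure.restrict_restrict hpre, RN_preim]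
  have hder : ∀ k : ℕ, ∀ y ∈ C ∩ Ico (0 : ℝ) 1,
      HasDerivWithinAt (fun y : ℝ => 1 - 2 / ((k : ℝ) + 2 + y)) (2 / ((k : ℝ) + 2 + y) ^ 2)
        (C ∩ Ico (0 : ℝ) 1) y := by
    intro k y hy
    have hy0 := hy.2.1
    have hp : (k : ℝ) + 2 + y ≠ 0 := by positivity
    have h := (((hasDerivAt_id y).const_add ((k : ℝ) + 2)).fun_inv hp).const_mul 2 |>.const_sub 1
    have e1 : (fun x : ℝ => 1 - 2 * ((k : ℝ) + 2 + id x)⁻¹) =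
        fun y : ℝ => 1 - 2 / ((k : ℝ) + 2 + y) := by
      ext x; simp [div_eq_mul_inv]
    have e2 : -(2 * (-1 / ((k : ℝ) + 2 + id y) ^ 2)) = 2 / ((k : ℝ) + 2 + y) ^ 2 := by
      simp only [id]; ring
    rw [e1, e2] at h
    exact h.hasDerivWithinAt
  have hinj : ∀ k : ℕ, InjOn (fun y : ℝ => 1 - 2 / ((k : ℝ) + 2 + y)) (C ∩ Ico (0 : ℝ) 1) := by
    intro k y hy z hz h
    have hy0 := hy.2.1
    have hz0 := hz.2.1
    have hp : (k : ℝ) + 2 + y ≠ 0 := by positivity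
    have hq : (k : ℝ) + 2 + z ≠ 0 := by positivity
    have h : (2 : ℝ) / ((k : ℝ) + 2 + y) = 2 / ((k : ℝ) + 2 + z) := by
      simp only at h; linarith
    rw [div_eq_div_iff hp hq] at h
    linarith
  rw [lintegral_iUnion _ (branch_disj _ inter_subset_right), lintegral_tsum]
  · congr 1
    ext k
    rw [lintegral_image_eq_lintegral_abs_deriv_mul hA (hder k) (hinj k)]
    have habs : ∀ y : ℝ, |2 / ((k : ℝ) + 2 + y) ^ 2| = 2 / ((k : ℝ) + 2 + y) ^ 2 :=
      fun y => abs_of_nonneg (by positivity)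
    simp_rw [habs]
  · intro k
    refine Measurable.aemeasurable ?_
    refine Measurable.mul (by fun_prop) (hφ.comp (by fun_prop))
  · intro k
    exact MeasureTheory.measurable_image_of_fderivWithin hA (fun x hx => (hder k x hx).hasFDerivWithinAt) (hinj k)

lemma rhoT_push {t : ℝ} (ht : t ∈ Icc (0 : ℝ) 1) (C : Set ℝ) (hC : MeasurableSet C) :
    rhoT 2 t (RN 2 ⁻¹' C) =
      ∫⁻ y in C ∩ Ico (0 : ℝ) 1, ENNReal.ofReal ((1 + t) * SS (y + t)) := by
  obtain ⟨ht0, ht1⟩ := ht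
  rw [rhoT, push_gen _ (by fun_prop) C hC]
  refine setLIntegral_congr_fun (hC.inter measurableSet_Ico) ?_
  intro y hy
  obtain ⟨hy0, hy1⟩ := hy.2
  simp only
  rw [SS, ← tsum_mul_left, ENNReal.ofReal_tsum_of_nonneg (fun k => by positivity)
    ((summable_S (by positivity)).mul_left _)]
  congr 1
  ext k
  rw [← ENNReal.ofReal_mul (by positivity)]
  congr 1
  push_cast
  have hp : 0 < (k : ℝ) + 2 + y := by positivity
  have hq : 0 < (k : ℝ) + 1 + (y + t) := by positivity
  have e : (2 : ℝ) - (1 - (1 - 2 / ((k : ℝ) + 2 + y))) * (1 - t) =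
      2 * ((k : ℝ) + 1 + (y + t)) / ((k : ℝ) + 2 + y) := by
    field_simp; ring
  rw [e]
  field_simp
  ring

lemma rhoN_push (C : Set ℝ) (hC : MeasurableSet C) :
    rhoN 2 (RN 2 ⁻¹' C) =
      ∫⁻ y in C ∩ Ico (0 : ℝ) 1, ENNReal.ofReal ((Real.log 2)⁻¹ * (1 / (1 + y))) := by
  have hlog : 0 < Real.log 2 := Real.log_pos (by norm_num)
  rw [rhoN, push_gen _ (by fun_prop) C hC]
  refine setLIntegral_congr_fun (hC.inter measurableSet_Ico) ?_
  intro y hy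
  obtain ⟨hy0, hy1⟩ := hy.2
  simp only
  set a : ℕ → ℝ := fun k => 1 / ((k : ℝ) + (1 + y)) with ha
  have hm : ∀ k, a (k + 1) ≤ a k := by
    intro k
    simp only [ha]
    push_cast
    gcongr
    linarith
  have hs := (hasSum_tele a hm (tendsto_inv_aux _)).mul_left (Real.log 2)⁻¹
  have ea : a 0 = 1 / (1 + y) := by simp [ha]
  rw [← ea, ← hs.tsum_eq, ENNReal.ofReal_tsum_of_nonneg
    (fun k => mul_nonneg (by positivity) (sub_nonneg.2 (hm k))) hs.summable]
  congr 1
  ext k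
  rw [← ENNReal.ofReal_mul (by positivity)]
  congr 1
  simp only [ha]
  push_cast
  have hp : 0 < (k : ℝ) + 2 + y := by positivity
  have hq : 0 < (k : ℝ) + (1 + y) := by positivity
  have e : (1 : ℝ) - 2 / ((k : ℝ) + 2 + y) + 2 - 1 =
      2 * ((k : ℝ) + (1 + y)) / ((k : ℝ) + 2 + y) := by
    field_simp; ring
  have e2 : (k : ℝ) + 1 + (1 + y) = k + 2 + y := by ring
  have e3 : (2 : ℝ) / (2 - 1) = 2 := by norm_num
  rw [e, e2, e3]
  field_simp
  ring

lemma rhoN_ne_top (C : Set ℝ) (hC : MeasurableSet C) : rhoN 2 (RN 2 ⁻¹' C) ≠ ⊤ := by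
  have hlog : 0 < Real.log 2 := Real.log_pos (by norm_num)
  rw [rhoN_push C hC]
  refine ne_of_lt (setLIntegral_lt_top_of_le_nnreal ?_ ⟨(Real.log 2)⁻¹.toNNReal, ?_⟩)
  · exact ne_top_of_le_ne_top (by simp : volume (Ico (0 : ℝ) 1) ≠ ⊤)
      (measure_mono inter_subset_right)
  · intro y hy
    refine ENNReal.ofReal_le_ofReal ?_
    have hy0 := hy.2.1
    have : 1 / (1 + y) ≤ 1 := by rw [div_le_one (by positivity)]; linarith
    nlinarith [inv_pos.2 hlog]

lemma compare_upper {t c : ℝ} (ht : t ∈ Icc (0 : ℝ) 1) (hc : 0 ≤ c) (C : Set ℝ)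
    (hC : MeasurableSet C)
    (h : ∀ y ∈ C ∩ Ico (0 : ℝ) 1, (1 + t) * SS (y + t) ≤ c * ((Real.log 2)⁻¹ * (1 / (1 + y)))) :
    (rhoT 2 t (RN 2 ⁻¹' C)) ≤ ENNReal.ofReal c * (rhoN 2 (RN 2 ⁻¹' C)) := by
  rw [rhoT_push ht C hC, rhoN_push C hC, ← lintegral_const_mul' _ _ ENNReal.ofReal_ne_top]
  refine setLIntegral_mono' (hC.inter measurableSet_Ico) fun y hy => ?_
  rw [← ENNReal.ofReal_mul hc]
  exact ENNReal.ofReal_le_ofReal (h y hy)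

lemma compare_lower {t c : ℝ} (ht : t ∈ Icc (0 : ℝ) 1) (hc : 0 ≤ c) (C : Set ℝ)
    (hC : MeasurableSet C)
    (h : ∀ y ∈ C ∩ Ico (0 : ℝ) 1, c * ((Real.log 2)⁻¹ * (1 / (1 + y))) ≤ (1 + t) * SS (y + t)) :
    ENNReal.ofReal c * (rhoN 2 (RN 2 ⁻¹' C)) ≤ (rhoT 2 t (RN 2 ⁻¹' C)) := by
  rw [rhoT_push ht C hC, rhoN_push C hC, ← lintegral_const_mul' _ _ ENNReal.ofReal_ne_top]
  refine setLIntegral_mono' (hC.inter measurableSet_Ico) fun y hy => ?_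
  rw [← ENNReal.ofReal_mul hc]
  exact ENNReal.ofReal_le_ofReal (h y hy)

lemma dens_iff_le {c g y : ℝ} (hy : 0 ≤ y) :
    g ≤ c * ((Real.log 2)⁻¹ * (1 / (1 + y))) ↔ g * (1 + y) * Real.log 2 ≤ c := by
  have hlog : 0 < Real.log 2 := Real.log_pos (by norm_num)
  have e : c * ((Real.log 2)⁻¹ * (1 / (1 + y))) = c / ((1 + y) * Real.log 2) := by
    field_simp
  rw [e, le_div_iff₀ (by positivity), mul_assoc]

lemma dens_iff_ge {c g y : ℝ} (hy : 0 ≤ y) :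
    c * ((Real.log 2)⁻¹ * (1 / (1 + y))) ≤ g ↔ c ≤ g * (1 + y) * Real.log 2 := by
  have hlog : 0 < Real.log 2 := Real.log_pos (by norm_num)
  have e : c * ((Real.log 2)⁻¹ * (1 / (1 + y))) = c / ((1 + y) * Real.log 2) := by
    field_simp
  rw [e, div_le_iff₀ (by positivity), mul_assoc]

lemma rhoT_ne_top {t : ℝ} (ht : t ∈ Icc (0 : ℝ) 1) (C : Set ℝ) (hC : MeasurableSet C) :
    rhoT 2 t (RN 2 ⁻¹' C) ≤
      ENNReal.ofReal (π ^ 2 / 6 * Real.log 2) * (rhoN 2 (RN 2 ⁻¹' C)) := by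
  have hlog : 0 < Real.log 2 := Real.log_pos (by norm_num)
  refine compare_upper ht (by positivity) C hC fun y hy => ?_
  rw [dens_iff_le hy.2.1]
  have := G_upper ht ⟨hy.2.1, hy.2.2.le⟩
  refine mul_le_mul_of_nonneg_right ?_ hlog.le
  linarith

lemma numeric : 2 ≤ Real.log 2 * (5 / 4 + π ^ 2 / 6) := by
  have h1 := Real.log_two_gt_d9
  have h2 := Real.pi_gt_d2
  have h3 : (3.14 : ℝ) ^ 2 ≤ π ^ 2 := by gcongr
  have h4 : (0.6931471803 : ℝ) * (5 / 4 + 3.14 ^ 2 / 6) ≤ Real.log 2 * (5 / 4 + π ^ 2 / 6) := by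
    gcongr
  refine le_trans ?_ h4
  norm_num

lemma set_lower {δ : ℝ} (h0 : 0 < δ) (h1 : δ < 1 / 2) :
    0 < (rhoN 2 (RN 2 ⁻¹' (Icc 0 δ))).toReal ∧
    π ^ 2 / 6 * Real.log 2 * (1 - 2 * δ) ≤
      (rhoT 2 0 (RN 2 ⁻¹' (Icc 0 δ))).toReal / (rhoN 2 (RN 2 ⁻¹' (Icc 0 δ))).toReal := by
  have hlog : 0 < Real.log 2 := Real.log_pos (by norm_num)
  have ht : (0 : ℝ) ∈ Icc (0 : ℝ) 1 := by simp
  have hN := rhoN_ne_top (Icc 0 δ) measurableSet_Icc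
  have hT : rhoT 2 0 (RN 2 ⁻¹' (Icc 0 δ)) ≠ ⊤ :=
    ne_top_of_le_ne_top (ENNReal.mul_ne_top ENNReal.ofReal_ne_top hN)
      (rhoT_ne_top ht _ measurableSet_Icc)
  have hpos : 0 < (rhoN 2 (RN 2 ⁻¹' (Icc 0 δ))).toReal := by
    refine ENNReal.toReal_pos ?_ hN
    rw [rhoN_push _ measurableSet_Icc]
    have e : Icc 0 δ ∩ Ico (0 : ℝ) 1 = Icc 0 δ := by
      apply inter_eq_left.2
      intro y hy
      exact ⟨hy.1, by linarith [hy.2]⟩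
    rw [e]
    have hle : ∫⁻ y in Icc 0 δ, ENNReal.ofReal ((Real.log 2)⁻¹ * (1 / 2)) ≤
        ∫⁻ y in Icc 0 δ, ENNReal.ofReal ((Real.log 2)⁻¹ * (1 / (1 + y))) := by
      refine setLIntegral_mono' measurableSet_Icc fun y hy => ENNReal.ofReal_le_ofReal ?_
      have := hy.1
      have := hy.2
      gcongr
      linarith
    rw [setLIntegral_const, Real.volume_Icc] at hle
    refine (lt_of_lt_of_le ?_ hle).ne'
    refine ENNReal.mul_pos ?_ ?_
    · rw [ENNReal.ofReal_ne_zero_iff]; positivity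
    · rw [ENNReal.ofReal_ne_zero_iff]; linarith
  refine ⟨hpos, ?_⟩
  rw [le_div_iff₀ hpos]
  have hc : 0 ≤ π ^ 2 / 6 * Real.log 2 * (1 - 2 * δ) :=
    mul_nonneg (by positivity) (by linarith)
  have h := compare_lower ht hc (Icc 0 δ) measurableSet_Icc (fun y hy => by
    rw [dens_iff_ge hy.2.1]
    have hy0 : 0 ≤ y := hy.1.1
    have hyδ : y ≤ δ := hy.1.2
    have h2 := SS_near hy0
    have hS : 0 ≤ SS y := tsum_nonneg fun k => by positivity
    have h3 : π ^ 2 / 6 * (1 - 2 * δ) ≤ π ^ 2 / 6 * (1 - 2 * y) := by gcongr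
    have h4 : π ^ 2 / 6 * (1 - 2 * δ) ≤ (1 + 0) * SS (y + 0) * (1 + y) := by
      rw [add_zero, add_zero]; nlinarith
    nlinarith [mul_le_mul_of_nonneg_right h4 hlog.le])
  have h' := ENNReal.toReal_mono hT h
  rwa [ENNReal.toReal_mul, ENNReal.toReal_ofReal hc] at h'

theorem stmt16 :
    sSup {r : ℝ | ∃ t ∈ Set.Icc (0 : ℝ) 1, ∃ C : Set ℝ, MeasurableSet C ∧
        C ⊆ Set.Icc (0 : ℝ) 1 ∧ 0 < (rhoN 2 (RN 2 ⁻¹' C)).toReal ∧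
        r = |(rhoT 2 t (RN 2 ⁻¹' C)).toReal / (rhoN 2 (RN 2 ⁻¹' C)).toReal - 1|}
      = Real.pi ^ 2 / 6 * Real.log 2 - 1 := by
  have hlog : 0 < Real.log 2 := Real.log_pos (by norm_num)
  refine csSup_eq_of_forall_le_of_forall_lt_exists_gt ?_ ?_ ?_
  · exact ⟨_, 0, by simp, Icc 0 (1 / 4), measurableSet_Icc,
      Icc_subset_Icc_right (by norm_num), (set_lower (by norm_num) (by norm_num)).1, rfl⟩
  · rintro r ⟨t, ht, C, hC, hC1, hpos, rfl⟩
    have hN := rhoN_ne_top C hC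
    have hu := rhoT_ne_top ht C hC
    have hT : rhoT 2 t (RN 2 ⁻¹' C) ≠ ⊤ :=
      ne_top_of_le_ne_top (ENNReal.mul_ne_top ENNReal.ofReal_ne_top hN) hu
    have hu' := ENNReal.toReal_mono (ENNReal.mul_ne_top ENNReal.ofReal_ne_top hN) hu
    rw [ENNReal.toReal_mul, ENNReal.toReal_ofReal (by positivity)] at hu'
    have hl := compare_lower (c := 5 / 4 * Real.log 2) ht (by positivity) C hC (fun y hy => by
      rw [dens_iff_ge hy.2.1]
      have := G_lower ht ⟨hy.2.1, hy.2.2.le⟩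
      refine mul_le_mul_of_nonneg_right ?_ hlog.le
      linarith)
    have hl' := ENNReal.toReal_mono hT hl
    rw [ENNReal.toReal_mul, ENNReal.toReal_ofReal (by positivity)] at hl'
    rw [← div_le_iff₀ hpos] at hu'
    rw [← le_div_iff₀ hpos] at hl'
    have := numeric
    rw [abs_le]
    constructor <;> linarith
  · intro w hw
    set K := π ^ 2 / 6 * Real.log 2 with hK
    have hKpos : 0 < K := by positivity
    set δ := min (1 / 4) ((K - 1 - w) / (4 * K)) with hδ
    have hδ0 : 0 < δ := lt_min (by norm_num) (div_pos (by linarith) (by positivity))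
    have hδ1 : δ < 1 / 2 := lt_of_le_of_lt (min_le_left _ _) (by norm_num)
    have hδ2 : δ * (4 * K) ≤ K - 1 - w := by
      rw [← le_div_iff₀ (by positivity)]; exact min_le_right _ _
    obtain ⟨h1, h2⟩ := set_lower hδ0 hδ1
    refine ⟨_, ⟨0, by simp, Icc 0 δ, measurableSet_Icc,
      Icc_subset_Icc_right (by linarith), h1, rfl⟩, ?_⟩
    refine lt_of_lt_of_le ?_ (le_abs_self _)
    rw [← hK] at h2
    nlinarith
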